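/- Let d ≥ 1, ε > 0, x ∈ ℝ^d. Let Q, P : ℝ^{2d} → ℝ^d and S : ℝ^{2d} → ℝ be smooth functions of (q,p), all of whose derivatives have at most polynomial growth, and define Φ(y,q,p) = S(q,p) + (i/2)|x − Q(q,p)|² + P(q,p)·(x − Q(q,p)) + (i/2)|y − q|² − p·(y − q). Assume the complex matrix Z(q,p) with entries Z_{kj} = (∂_{q_k} − i∂_{p_k})(Q_j + iP_j) satisfies i(∂_{q_k} − i∂_{p_k})Φ = Σ_j Z_{kj}(x_j − Q_j) for all (y,q,p), is invertible for every (q,p), and that all entries of Z^{-1} together with all their derivatives have at most polynomial growth. Then for every Schwartz function b : ℝ^{3d} → ℂ^d of (y,q,p): ∫_{ℝ^{3d}} Σ_j b_j(y,q,p)(x_j − Q_j(q,p)) e^{iΦ/ε} dy dq dp = −ε ∫_{ℝ^{3d}} Σ_{j,k} ∂_{z_k}(b_j Z^{-1}_{jk})(y,q,p) e^{iΦ/ε} dy dq dp, where ∂_{z_k} = ∂_{q_k} − i∂_{p_k} acts in (q,p) at fixed y, and both integrands are absolutely integrable. -/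

import Mathlib

open MeasureTheory

noncomputable section

/-- The frozen Gaussian phase `Φ(y,q,p)` (with `x` fixed), on the triple space `(y,q,p)`. -/
def FGAphase (d : ℕ) (x : Fin d → ℝ)
    (S : (Fin d → ℝ) × (Fin d → ℝ) → ℝ)
    (Q P : (Fin d → ℝ) × (Fin d → ℝ) → Fin d → ℝ)
    (w : (Fin d → ℝ) × (Fin d → ℝ) × (Fin d → ℝ)) : ℂ :=
  (S (w.2.1, w.2.2) : ℂ)
    + (Complex.I / 2) * ((∑ j, (x j - Q (w.2.1, w.2.2) j) ^ 2 : ℝ) : ℂ)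
    + ((∑ j, P (w.2.1, w.2.2) j * (x j - Q (w.2.1, w.2.2) j) : ℝ) : ℂ)
    + (Complex.I / 2) * ((∑ j, (w.1 j - w.2.1 j) ^ 2 : ℝ) : ℂ)
    - ((∑ j, w.2.2 j * (w.1 j - w.2.1 j) : ℝ) : ℂ)

/-- The entries `Z_{kj} = ∂_{z_k}(Q_j + iP_j)`, `∂_{z_k} = ∂_{q_k} − i∂_{p_k}`. -/
def Zentry (d : ℕ) (Q P : (Fin d → ℝ) × (Fin d → ℝ) → Fin d → ℝ)
    (w : (Fin d → ℝ) × (Fin d → ℝ)) (k j : Fin d) : ℂ :=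
  (fderiv ℝ (fun v => ((Q v j : ℝ) : ℂ) + Complex.I * ((P v j : ℝ) : ℂ)) w (Pi.single k 1, 0))
    - Complex.I *
      (fderiv ℝ (fun v => ((Q v j : ℝ) : ℂ) + Complex.I * ((P v j : ℝ) : ℂ)) w (0, Pi.single k 1))

/-- `∂_{z_k}` acting in `(q,p)` at fixed `y`, on functions of `(y,q,p)`. -/
def dz3 (d : ℕ) (k : Fin d)
    (g : (Fin d → ℝ) × (Fin d → ℝ) × (Fin d → ℝ) → ℂ)
    (w : (Fin d → ℝ) × (Fin d → ℝ) × (Fin d → ℝ)) : ℂ :=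
  fderiv ℝ g w (0, Pi.single k 1, 0) - Complex.I * fderiv ℝ g w (0, 0, Pi.single k 1)

/-!
Since the matrix `Z` is invertible, the gradient relation `i ∂_{z_k} Φ = ∑ j, Z_{kj} (x_j - Q_j)`
can be solved for `x_j - Q_j = ε ∑ k, Z⁻¹_{jk} ∂_{z_k}(iΦ/ε)`. The factor `∂_{z_k}(iΦ/ε) e^{iΦ/ε}`
is `∂_{z_k} e^{iΦ/ε}`, and integrating by parts moves `∂_{z_k}` to `b_j Z⁻¹_{jk}`. No boundary terms
arise: `Im Φ ≥ 0` makes `e^{iΦ/ε}` a function of temperate growth, while `b_j Z⁻¹_{jk}` is Schwartz.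
-/

open Complex
open scoped SchwartzMap Matrix

section TemperateGrowth

variable {E F : Type*} [NormedAddCommGroup E] [NormedSpace ℝ E]
  [NormedAddCommGroup F] [NormedSpace ℝ F]

@[fun_prop]
lemma hasTemperateGrowth_fst : (fun w : E × F => w.1).HasTemperateGrowth :=
  (ContinuousLinearMap.fst ℝ E F).hasTemperateGrowth

@[fun_prop]
lemma hasTemperateGrowth_snd : (fun w : E × F => w.2).HasTemperateGrowth :=
  (ContinuousLinearMap.snd ℝ E F).hasTemperateGrowth

@[fun_prop]
lemma hasTemperateGrowth_apply {ι : Type*} [Fintype ι] (i : ι) :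
    (fun w : ι → F => w i).HasTemperateGrowth :=
  (ContinuousLinearMap.proj (R := ℝ) (φ := fun _ : ι => F) i).hasTemperateGrowth

lemma hasTemperateGrowth_fderiv {f : E → F} (hf : f.HasTemperateGrowth) :
    (fderiv ℝ f).HasTemperateGrowth := by
  refine ⟨hf.1.fderiv_right (by simp), fun n => ?_⟩
  simpa only [norm_iteratedFDeriv_fderiv] using hf.2 (n + 1)

lemma hasTemperateGrowth_fderiv_apply {f : E → F} (hf : f.HasTemperateGrowth) (v : E) :
    (fun w => fderiv ℝ f w v).HasTemperateGrowth :=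
  (ContinuousLinearMap.apply ℝ F v).hasTemperateGrowth.comp (hasTemperateGrowth_fderiv hf)

lemma norm_iteratedFDeriv_cexp (n : ℕ) (z : ℂ) : ‖iteratedFDeriv ℝ n exp z‖ = Real.exp z.re := by
  have hrestrict := (contDiff_exp (𝕜 := ℂ) (n := n)).contDiffAt (x := z)
    |>.restrictScalars_iteratedFDeriv_eventuallyEq (𝕜 := ℝ) |>.eq_of_nhds
  rw [← hrestrict, Function.comp_apply, ContinuousMultilinearMap.norm_restrictScalars,
    norm_iteratedFDeriv_eq_norm_iteratedDeriv, iteratedDeriv_eq_iterate, iter_deriv_exp, norm_exp]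

lemma hasTemperateGrowth_cexp {ψ : E → ℂ} (hψ : ψ.HasTemperateGrowth) {c : ℝ}
    (hre : ∀ w, (ψ w).re ≤ c) : (fun w => exp (ψ w)).HasTemperateGrowth := by
  have hexp : ContDiff ℝ ⊤ exp := contDiff_exp
  have hunique : UniqueDiffOn ℝ {z : ℂ | z.re ≤ c} := by
    refine uniqueDiffOn_convex (convex_halfSpace_re_le c) ?_
    rw [interior_setOfPred_re_le]
    exact ⟨(c - 1 : ℝ), by simp⟩
  refine Function.HasTemperateGrowth.comp' (Set.range_subset_iff.2 hre) hunique
    (hexp.of_le le_top).contDiffOn (fun N => ⟨0, Real.exp c, (Real.exp_pos c).le, ?_⟩) hψ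
  intro n _ z hz
  rw [iteratedFDerivWithin_eq_iteratedFDeriv hunique (hexp.of_le le_top).contDiffAt hz,
    norm_iteratedFDeriv_cexp, pow_zero, mul_one]
  exact Real.exp_le_exp.2 hz

end TemperateGrowth

section ComplexDirDeriv

variable {E : Type*} [NormedAddCommGroup E] [NormedSpace ℝ E]

/-- The derivative of `g` along the complex vector `u - i v`. It covers every operator
`∂_{z_k} = ∂_{q_k} - i ∂_{p_k}`, with `u` and `v` the `k`-th coordinate vectors of `q` and `p`. -/
def complexDirDeriv (u v : E) (g : E → ℂ) (w : E) : ℂ :=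
  fderiv ℝ g w u - I * fderiv ℝ g w v

variable {u v w : E} {g : E → ℂ}

lemma complexDirDeriv_const_mul (hg : DifferentiableAt ℝ g w) (c : ℂ) :
    complexDirDeriv u v (fun w' => c * g w') w = c * complexDirDeriv u v g w := by
  simp only [complexDirDeriv, fderiv_const_mul hg, smul_apply, smul_eq_mul]
  ring

lemma complexDirDeriv_cexp (hg : DifferentiableAt ℝ g w) :
    complexDirDeriv u v (fun w' => exp (g w')) w = complexDirDeriv u v g w * exp (g w) := by
  simp only [complexDirDeriv, hg.hasFDerivAt.cexp.fderiv, smul_apply, smul_eq_mul]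
  ring

lemma mul_complexDirDeriv_cexp_I_mul_div (hg : DifferentiableAt ℝ g w) {c : ℂ} (hc : c ≠ 0) :
    c * complexDirDeriv u v (fun w' => exp (I * g w' / c)) w
      = I * complexDirDeriv u v g w * exp (I * g w / c) := by
  simp only [mul_div_right_comm I]
  rw [complexDirDeriv_cexp (hg.const_mul _), complexDirDeriv_const_mul hg, ← mul_assoc, ← mul_assoc,
    mul_div_cancel₀ _ hc]

lemma hasTemperateGrowth_complexDirDeriv (hg : g.HasTemperateGrowth) (u v : E) :
    (complexDirDeriv u v g).HasTemperateGrowth :=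
  (hasTemperateGrowth_fderiv_apply hg u).sub
    ((Function.HasTemperateGrowth.const I).mul (hasTemperateGrowth_fderiv_apply hg v))

end ComplexDirDeriv

section IntegrationByParts

variable {E : Type*} [NormedAddCommGroup E] [NormedSpace ℝ E] [MeasurableSpace E] [BorelSpace E]
  [SecondCountableTopology E] {μ : Measure E}

lemma integrable_schwartz_mul [μ.HasTemperateGrowth] (f : 𝓢(E, ℂ)) {g : E → ℂ}
    (hg : g.HasTemperateGrowth) : Integrable (fun w => f w * g w) μ :=
  (SchwartzMap.bilinLeftCLM (ContinuousLinearMap.mul ℝ ℂ) hg f).integrable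

lemma integrable_fderiv_schwartz_mul [μ.HasTemperateGrowth] (f : 𝓢(E, ℂ)) {g : E → ℂ}
    (hg : g.HasTemperateGrowth) (v : E) : Integrable (fun w => fderiv ℝ f w v * g w) μ :=
  integrable_schwartz_mul (SchwartzMap.evalCLM ℝ E ℂ v (SchwartzMap.fderivCLM ℝ E ℂ f)) hg

lemma integrable_complexDirDeriv_schwartz_mul [μ.HasTemperateGrowth] (f : 𝓢(E, ℂ)) {g : E → ℂ}
    (hg : g.HasTemperateGrowth) (u v : E) :
    Integrable (fun w => complexDirDeriv u v f w * g w) μ := by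
  simpa only [complexDirDeriv, sub_mul, mul_assoc] using
    (integrable_fderiv_schwartz_mul f hg u).sub'
      ((integrable_fderiv_schwartz_mul f hg v).const_mul I)

variable [FiniteDimensional ℝ E] [μ.IsAddHaarMeasure]

lemma integral_schwartz_mul_fderiv (f : 𝓢(E, ℂ)) {g : E → ℂ} (hg : g.HasTemperateGrowth) (v : E) :
    ∫ w, f w * fderiv ℝ g w v ∂μ = -∫ w, fderiv ℝ f w v * g w ∂μ :=
  integral_mul_fderiv_eq_neg_fderiv_mul_of_integrable (integrable_fderiv_schwartz_mul f hg v)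
    (integrable_schwartz_mul f (hasTemperateGrowth_fderiv_apply hg v))
    (integrable_schwartz_mul f hg) (fun _ _ => f.differentiableAt)
    (fun w _ => hg.1.differentiable (by simp) w)

lemma integral_schwartz_mul_complexDirDeriv (f : 𝓢(E, ℂ)) {g : E → ℂ}
    (hg : g.HasTemperateGrowth) (u v : E) :
    ∫ w, f w * complexDirDeriv u v g w ∂μ = -∫ w, complexDirDeriv u v f w * g w ∂μ := by
  have hfg (a : E) := integrable_schwartz_mul (μ := μ) f (hasTemperateGrowth_fderiv_apply hg a)
  have hf'g := integrable_fderiv_schwartz_mul (μ := μ) f hg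
  simp only [complexDirDeriv, mul_sub, sub_mul, mul_left_comm _ I, mul_assoc I]
  rw [integral_sub (hfg u) ((hfg v).const_mul I), integral_sub (hf'g u) ((hf'g v).const_mul I),
    integral_const_mul, integral_const_mul, integral_schwartz_mul_fderiv f hg,
    integral_schwartz_mul_fderiv f hg]
  ring

end IntegrationByParts

section Sums

variable {E ι : Type*} [NormedAddCommGroup E] [NormedSpace ℝ E] [MeasurableSpace E] [BorelSpace E]
  [SecondCountableTopology E] {μ : Measure E} [Fintype ι] (f : ι → 𝓢(E, ℂ)) {g : E → ℂ}
  (hg : g.HasTemperateGrowth) (u v : ι → E)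

include hg

lemma integrable_sum_schwartz_mul_complexDirDeriv [μ.HasTemperateGrowth] :
    Integrable (fun w => ∑ i, f i w * complexDirDeriv (u i) (v i) g w) μ :=
  integrable_finsetSum _ fun i _ =>
    integrable_schwartz_mul (f i) (hasTemperateGrowth_complexDirDeriv hg (u i) (v i))

lemma integrable_sum_complexDirDeriv_schwartz_mul [μ.HasTemperateGrowth] :
    Integrable (fun w => ∑ i, complexDirDeriv (u i) (v i) (f i) w * g w) μ :=
  integrable_finsetSum _ fun i _ =>
    integrable_complexDirDeriv_schwartz_mul (f i) hg (u i) (v i)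

lemma integral_sum_schwartz_mul_complexDirDeriv [FiniteDimensional ℝ E] [μ.IsAddHaarMeasure] :
    ∫ w, ∑ i, f i w * complexDirDeriv (u i) (v i) g w ∂μ
      = -∫ w, ∑ i, complexDirDeriv (u i) (v i) (f i) w * g w ∂μ := by
  rw [integral_finsetSum _ fun i _ =>
      integrable_schwartz_mul (f i) (hasTemperateGrowth_complexDirDeriv hg (u i) (v i)),
    integral_finsetSum _ fun i _ =>
      integrable_complexDirDeriv_schwartz_mul (f i) hg (u i) (v i), ← Finset.sum_neg_distrib]
  exact Finset.sum_congr rfl fun i _ => integral_schwartz_mul_complexDirDeriv (f i) hg (u i) (v i)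

end Sums

lemma exists_schwartz_eq_apply_mul {E ι : Type*} [NormedAddCommGroup E] [NormedSpace ℝ E]
    [Fintype ι] (b : 𝓢(E, ι → ℂ)) (j : ι) {g : E → ℂ} (hg : g.HasTemperateGrowth) :
    ∃ f : 𝓢(E, ℂ), ⇑f = fun w => b w j * g w :=
  ⟨SchwartzMap.bilinLeftCLM (ContinuousLinearMap.mul ℝ ℂ) hg
    (b.postcompCLM (ContinuousLinearMap.proj (R := ℝ) (φ := fun _ => ℂ) j)), rfl⟩

lemma dotProduct_eq_sum_of_mulVec_eq {R m n : Type*} [Semiring R] [Fintype m] [Fintype n]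
    [DecidableEq n] {A : Matrix m n R} {B : Matrix n m R} (hBA : B * A = 1) (b a : n → R)
    {z : m → R} (hz : A *ᵥ a = z) : b ⬝ᵥ a = ∑ j, ∑ k, b j * B j k * z k := by
  have ha : a = B *ᵥ z := by rw [← hz, Matrix.mulVec_mulVec, hBA, Matrix.one_mulVec]
  simp only [ha, dotProduct, Matrix.mulVec, Finset.mul_sum, mul_assoc]

section MatrixInversion

variable {E m n : Type*} [NormedAddCommGroup E] [NormedSpace ℝ E] [FiniteDimensional ℝ E]
  [MeasurableSpace E] [BorelSpace E] {μ : Measure E} [μ.IsAddHaarMeasure]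
  [Fintype m] [Fintype n] [DecidableEq n] {g : E → ℂ} {u v : m → E} {c : ℂ} {a : E → n → ℂ}
  {A : E → Matrix m n ℂ} {B : E → Matrix n m ℂ}

theorem integral_dotProduct_mul_eq_of_mulVec_eq_complexDirDeriv (hg : g.HasTemperateGrowth)
    (hB : ∀ j k, (fun w => B w j k).HasTemperateGrowth) (hBA : ∀ w, B w * A w = 1)
    (hgrad : ∀ w k, c * complexDirDeriv (u k) (v k) g w = (A w *ᵥ a w) k * g w)
    (b : 𝓢(E, n → ℂ)) :
    Integrable (fun w => (b w ⬝ᵥ a w) * g w) μ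
    ∧ Integrable (fun w =>
        (∑ j, ∑ k, complexDirDeriv (u k) (v k) (fun w' => b w' j * B w' j k) w) * g w) μ
    ∧ ∫ w, (b w ⬝ᵥ a w) * g w ∂μ = -c * ∫ w,
        (∑ j, ∑ k, complexDirDeriv (u k) (v k) (fun w' => b w' j * B w' j k) w) * g w ∂μ := by
  choose f hf using fun i : n × m => exists_schwartz_eq_apply_mul b i.1 (hB i.1 i.2)
  have hleft (w) : (b w ⬝ᵥ a w) * g w
      = c * ∑ i, f i w * complexDirDeriv (u i.2) (v i.2) g w := by
    have hsolve := dotProduct_eq_sum_of_mulVec_eq (hBA w) (b w) (a w) rfl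
    simp only [hsolve, Fintype.sum_prod_type, Finset.mul_sum, Finset.sum_mul, hf, mul_left_comm c,
      hgrad, mul_assoc]
  have hright (w) : (∑ j, ∑ k, complexDirDeriv (u k) (v k) (fun w' => b w' j * B w' j k) w) * g w
      = ∑ i, complexDirDeriv (u i.2) (v i.2) (f i) w * g w := by
    simp only [Fintype.sum_prod_type, Finset.sum_mul, hf]
  simp only [hleft, hright]
  refine ⟨(integrable_sum_schwartz_mul_complexDirDeriv f hg _ _).const_mul _,
    integrable_sum_complexDirDeriv_schwartz_mul f hg _ _, ?_⟩
  rw [integral_const_mul, integral_sum_schwartz_mul_complexDirDeriv f hg, mul_neg, neg_mul]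

end MatrixInversion

section FGAphase

variable {d : ℕ} {S : (Fin d → ℝ) × (Fin d → ℝ) → ℝ}
  {Q P : (Fin d → ℝ) × (Fin d → ℝ) → Fin d → ℝ}

lemma hasTemperateGrowth_FGAphase (x : Fin d → ℝ) (hS : S.HasTemperateGrowth)
    (hQ : Q.HasTemperateGrowth) (hP : P.HasTemperateGrowth) :
    (FGAphase d x S Q P).HasTemperateGrowth := by
  unfold FGAphase
  simp only [Prod.mk.eta]
  fun_prop

lemma im_FGAphase (x : Fin d → ℝ) (w : (Fin d → ℝ) × (Fin d → ℝ) × (Fin d → ℝ)) :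
    (FGAphase d x S Q P w).im = ((∑ j, (x j - Q w.2 j) ^ 2) + ∑ j, (w.1 j - w.2.1 j) ^ 2) / 2 := by
  have hI_re : (I / 2).re = 0 := by simp
  have hI_im : (I / 2).im = 1 / 2 := by simp
  simp only [FGAphase, sub_im, add_im, mul_im, ofReal_im, ofReal_re, hI_re, hI_im]
  ring

lemma re_I_mul_FGAphase_div_nonpos (x : Fin d → ℝ) {ε : ℝ} (hε : 0 < ε)
    (w : (Fin d → ℝ) × (Fin d → ℝ) × (Fin d → ℝ)) : (I * FGAphase d x S Q P w / ε).re ≤ 0 := by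
  rw [div_ofReal_re, I_mul_re, im_FGAphase]
  exact div_nonpos_of_nonpos_of_nonneg (neg_nonpos.2 (by positivity)) hε.le

lemma hasTemperateGrowth_cexp_FGAphase (x : Fin d → ℝ) {ε : ℝ} (hε : 0 < ε)
    (hS : S.HasTemperateGrowth) (hQ : Q.HasTemperateGrowth) (hP : P.HasTemperateGrowth) :
    (fun w => exp (I * FGAphase d x S Q P w / ε)).HasTemperateGrowth := by
  refine hasTemperateGrowth_cexp ?_ (re_I_mul_FGAphase_div_nonpos x hε)
  simp only [mul_div_right_comm]
  exact (Function.HasTemperateGrowth.const (I / ε)).mul (hasTemperateGrowth_FGAphase x hS hQ hP)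

end FGAphase

/-- the first-order integration by parts lemma of the frozen Gaussian
approximation: `∫ b·(x−Q) e^{iΦ/ε} = −ε ∫ Σ_{j,k} ∂_{z_k}(b_j Z⁻¹_{jk}) e^{iΦ/ε}`. -/
theorem stmt_4 (d : ℕ) (hd : 1 ≤ d) (ε : ℝ) (hε : 0 < ε) (x : Fin d → ℝ)
    (S : (Fin d → ℝ) × (Fin d → ℝ) → ℝ)
    (Q P : (Fin d → ℝ) × (Fin d → ℝ) → Fin d → ℝ)
    (hS : Function.HasTemperateGrowth S)
    (hQ : Function.HasTemperateGrowth Q) (hP : Function.HasTemperateGrowth P)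
    (hZPhi : ∀ y q p : Fin d → ℝ, ∀ k : Fin d,
      Complex.I * dz3 d k (FGAphase d x S Q P) (y, q, p)
        = ∑ j, Zentry d Q P (q, p) k j * (((x j : ℝ) : ℂ) - ((Q (q, p) j : ℝ) : ℂ)))
    (hZinv : ∀ w : (Fin d → ℝ) × (Fin d → ℝ),
      IsUnit (Matrix.of (fun k j => Zentry d Q P w k j) : Matrix (Fin d) (Fin d) ℂ))
    (Zinv : (Fin d → ℝ) × (Fin d → ℝ) → Matrix (Fin d) (Fin d) ℂ)
    (hZinvL : ∀ w, Zinv w * Matrix.of (fun k j => Zentry d Q P w k j) = 1)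
    (hZinvR : ∀ w, Matrix.of (fun k j => Zentry d Q P w k j) * Zinv w = 1)
    (hZinvTemp : ∀ j k : Fin d, Function.HasTemperateGrowth (fun w => Zinv w j k))
    (b : SchwartzMap ((Fin d → ℝ) × (Fin d → ℝ) × (Fin d → ℝ)) (Fin d → ℂ)) :
    Integrable (fun w : (Fin d → ℝ) × (Fin d → ℝ) × (Fin d → ℝ) =>
        (∑ j, b w j * (((x j : ℝ) : ℂ) - ((Q (w.2.1, w.2.2) j : ℝ) : ℂ)))
          * Complex.exp (Complex.I * FGAphase d x S Q P w / (ε : ℂ)))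
    ∧ Integrable (fun w : (Fin d → ℝ) × (Fin d → ℝ) × (Fin d → ℝ) =>
        (∑ j, ∑ k, dz3 d k (fun w' => b w' j * Zinv (w'.2.1, w'.2.2) j k) w)
          * Complex.exp (Complex.I * FGAphase d x S Q P w / (ε : ℂ)))
    ∧ (∫ w : (Fin d → ℝ) × (Fin d → ℝ) × (Fin d → ℝ),
        (∑ j, b w j * (((x j : ℝ) : ℂ) - ((Q (w.2.1, w.2.2) j : ℝ) : ℂ)))
          * Complex.exp (Complex.I * FGAphase d x S Q P w / (ε : ℂ)))
      = -(ε : ℂ) * ∫ w : (Fin d → ℝ) × (Fin d → ℝ) × (Fin d → ℝ),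
        (∑ j, ∑ k, dz3 d k (fun w' => b w' j * Zinv (w'.2.1, w'.2.2) j k) w)
          * Complex.exp (Complex.I * FGAphase d x S Q P w / (ε : ℂ)) := by
  have hΦ := (hasTemperateGrowth_FGAphase x hS hQ hP).1.differentiable (by simp)
  have hgrad (w) (k : Fin d) :
      (ε : ℂ) * complexDirDeriv (0, Pi.single k 1, 0) (0, 0, Pi.single k 1)
          (fun w' => exp (I * FGAphase d x S Q P w' / ε)) w
        = (Matrix.of (fun k j => Zentry d Q P w.2 k j) *ᵥ fun j => (x j : ℂ) - Q w.2 j) k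
          * exp (I * FGAphase d x S Q P w / ε) := by
    rw [mul_complexDirDeriv_cexp_I_mul_div (hΦ w) (ofReal_ne_zero.2 hε.ne')]
    exact congrArg (· * _) (hZPhi w.1 w.2.1 w.2.2 k)
  have hvol₂ : (volume : Measure ((Fin d → ℝ) × (Fin d → ℝ))).IsAddHaarMeasure :=
    Measure.prod.instIsAddHaarMeasure _ _
  have hvol₃ : (volume : Measure ((Fin d → ℝ) × (Fin d → ℝ) × (Fin d → ℝ))).IsAddHaarMeasure :=
    Measure.prod.instIsAddHaarMeasure _ _
  exact integral_dotProduct_mul_eq_of_mulVec_eq_complexDirDeriv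
    (hasTemperateGrowth_cexp_FGAphase x hε hS hQ hP)
    (fun j k => (hZinvTemp j k).comp hasTemperateGrowth_snd) (fun w => hZinvL w.2) hgrad b
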